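/- arXiv:quant-ph/0305022 — 4 statements merged into one kernel-verified Lean document; each statement's English description precedes it below -/
import Mathlib

section
/- For all integers n and s with 1 ≤ s ≤ n, the number of ordered pairs (A, B) of s-element subsets of Fin n satisfying |A ∩ B| = 1 equals n · C(n−1, s−1) · C(n−s, s−1), where C(a, b) denotes the binomial coefficient. -/
/-!
Fix the first set `A`. A set `B` with `|B| = s` and `|A ∩ B| = 1` is determined by its trace
`A ∩ B`, a singleton in `A`, and by `B \ A`, an `(s-1)`-subset of the complement of `A`; hence
there are `s * C(n-s, s-1)` such `B` (`card_filter_inter_eq_one`). Summing over the `C(n, s)`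
choices of `A` and using the absorption identity `n * C(n-1, s-1) = C(n, s) * s` gives the count.
-/

theorem card_filter_inter_eq_one (n s : ℕ) (hs : 1 ≤ s) (A : Finset (Fin n)) (hA : A.card = s) :
    (Finset.univ.filter
        (fun B : Finset (Fin n) => B.card = s ∧ (A ∩ B).card = 1)).card =
      s * Nat.choose (n - s) (s - 1) := by
  have h : (Finset.powersetCard 1 A ×ˢ Finset.powersetCard (s - 1) Aᶜ).card =
      s * Nat.choose (n - s) (s - 1) := by
    simp [Finset.card_compl, hA]
  rw [← h]
  refine Finset.card_bij' (fun B _ => (A ∩ B, B \ A)) (fun q _ => q.1 ∪ q.2) ?_ ?_ ?_ ?_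
  · intro B hB
    simp only [Finset.mem_filter, Finset.mem_univ, true_and] at hB
    have h1 := Finset.card_sdiff_add_card_inter B A
    rw [Finset.inter_comm] at h1
    simp only [Finset.mem_product, Finset.mem_powersetCard]
    refine ⟨⟨Finset.inter_subset_left, hB.2⟩, ?_, by omega⟩
    intro x hx
    simp_all
  · rintro ⟨C, D⟩ hq
    simp only [Finset.mem_product, Finset.mem_powersetCard] at hq
    obtain ⟨⟨hC, hC1⟩, hD, hD1⟩ := hq
    have hAD : Disjoint A D := (Finset.subset_compl_iff_disjoint_left).1 hD
    have hCD : Disjoint C D := Finset.disjoint_of_subset_left hC hAD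
    simp only [Finset.mem_filter, Finset.mem_univ, true_and]
    refine ⟨by rw [Finset.card_union_of_disjoint hCD]; omega, ?_⟩
    rw [Finset.inter_union_distrib_left, Finset.disjoint_iff_inter_eq_empty.1 hAD,
      Finset.inter_eq_right.2 hC, Finset.union_empty, hC1]
  · intro B _
    ext x
    simp only [Finset.mem_union, Finset.mem_inter, Finset.mem_sdiff]
    tauto
  · rintro ⟨C, D⟩ hq
    simp only [Finset.mem_product, Finset.mem_powersetCard] at hq
    obtain ⟨⟨hC, -⟩, hD, -⟩ := hq
    ext x <;>
    · have h1 := @hC x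
      have h2 := @hD x
      simp only [Finset.mem_compl] at h2
      simp only [Finset.mem_union, Finset.mem_inter, Finset.mem_sdiff]
      tauto

/-- For all integers `n` and `s` with `1 ≤ s ≤ n`, the number of ordered
pairs `(A, B)` of `s`-element subsets of `Fin n` with `|A ∩ B| = 1` equals
`n * C(n-1, s-1) * C(n-s, s-1)`. -/
theorem stmt_0 (n s : ℕ) (hs : 1 ≤ s) (hsn : s ≤ n) :
    (Finset.univ.filter
        (fun p : Finset (Fin n) × Finset (Fin n) =>
          p.1.card = s ∧ p.2.card = s ∧ (p.1 ∩ p.2).card = 1)).card =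
      n * Nat.choose (n - 1) (s - 1) * Nat.choose (n - s) (s - 1) := by
  have absorb : n * Nat.choose (n - 1) (s - 1) = Nat.choose n s * s := by
    obtain ⟨m, rfl⟩ : ∃ m, n = m + 1 := ⟨n - 1, by omega⟩
    obtain ⟨k, rfl⟩ : ∃ k, s = k + 1 := ⟨s - 1, by omega⟩
    exact Nat.add_one_mul_choose_eq m k
  have maps : ∀ p ∈ Finset.univ.filter
      (fun p : Finset (Fin n) × Finset (Fin n) =>
        p.1.card = s ∧ p.2.card = s ∧ (p.1 ∩ p.2).card = 1),
      p.1 ∈ Finset.powersetCard s (Finset.univ : Finset (Fin n)) := by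
    intro p hp
    simp only [Finset.mem_filter, Finset.mem_univ, true_and] at hp
    simp [Finset.mem_powersetCard, hp.1]
  rw [Finset.card_eq_sum_card_fiberwise maps, absorb, mul_assoc]
  have fiber : ∀ A ∈ Finset.powersetCard s (Finset.univ : Finset (Fin n)),
      ((Finset.univ.filter
        (fun p : Finset (Fin n) × Finset (Fin n) =>
          p.1.card = s ∧ p.2.card = s ∧ (p.1 ∩ p.2).card = 1)).filter
            (fun p => p.1 = A)).card = s * Nat.choose (n - s) (s - 1) := by
    intro A hA
    have hA' := (Finset.mem_powersetCard.1 hA).2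
    rw [← card_filter_inter_eq_one n s hs A hA']
    refine Finset.card_bij' (fun p _ => p.2) (fun B _ => (A, B)) ?_ ?_ ?_ ?_
    · rintro ⟨A', B⟩ h
      simp only [Finset.mem_filter, Finset.mem_univ, true_and] at h ⊢
      obtain ⟨⟨-, h⟩, rfl⟩ := h
      exact h
    · intro B h
      simp only [Finset.mem_filter, Finset.mem_univ, true_and] at h ⊢
      exact ⟨⟨hA', h⟩, trivial⟩
    · rintro ⟨A', B⟩ h
      simp only [Finset.mem_filter] at h
      simp [h.2]
    · intro B _
      rfl
  rw [Finset.sum_congr rfl fiber]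
  simp
end

section
/- For every integer s ≥ 1, setting n = s², if A and B are chosen independently and uniformly at random among the s-element subsets of Fin n, then the probability that |A ∩ B| = 1 is at least 1/e; equivalently, n · C(n−1, s−1) · C(n−s, s−1) ≥ (1/Real.exp 1) · (C(n, s))². -/
/-!
Put `t = s - 1`, so that `n = (t + 1)²`, `n - 1 = (t² + t) + t` and `n - s = t² + t`.
Absorption (`n * C(n-1, s-1) = s * C(n, s)`) reduces the claim to
`C(n-1, t) ≤ e * C(n-s, t)`. The ratio of these binomials is the product over `i < t` of
`(n - 1 - i) / (n - s - i) = 1 + t / (t² + t - i) ≤ 1 + 1 / t`, hence it is at most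
`(1 + 1 / t) ^ t ≤ e`. The product bound is `descFactorial_mul_pow_le`.
-/

/-- The bound `∏_{i<k} (m + t - i) / (m - i) ≤ (1 + 1/t)^k` for `m = t² + t`, `k ≤ t`,
with denominators cleared. -/
lemma descFactorial_mul_pow_le (t k : ℕ) (hk : k ≤ t) :
    (t ^ 2 + t + t).descFactorial k * t ^ k ≤ (t + 1) ^ k * (t ^ 2 + t).descFactorial k := by
  induction k with
  | zero => simp
  | succ k ih =>
    have h1 : (t ^ 2 + t + t - k) * t ≤ (t + 1) * (t ^ 2 + t - k) := by
      obtain ⟨d, rfl⟩ := Nat.exists_eq_add_of_le hk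
      have e1 : (k + 1 + d) ^ 2 + (k + 1 + d) + (k + 1 + d) - k
          = (k + 1 + d) ^ 2 + (k + 1 + d) + (1 + d) := by omega
      have e2 : (k + 1 + d) ^ 2 + (k + 1 + d) - k = (k + 1 + d) ^ 2 + (1 + d) := by omega
      rw [e1, e2]
      nlinarith
    calc (t ^ 2 + t + t).descFactorial (k + 1) * t ^ (k + 1)
        = ((t ^ 2 + t + t - k) * t) * ((t ^ 2 + t + t).descFactorial k * t ^ k) := by
          rw [Nat.descFactorial_succ]; ring
      _ ≤ ((t + 1) * (t ^ 2 + t - k)) * ((t + 1) ^ k * (t ^ 2 + t).descFactorial k) :=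
          Nat.mul_le_mul h1 (ih (by omega))
      _ = _ := by rw [Nat.descFactorial_succ]; ring

lemma succ_pow_le_exp_mul_pow (t : ℕ) :
    ((t : ℝ) + 1) ^ t ≤ Real.exp 1 * (t : ℝ) ^ t := by
  rcases Nat.eq_zero_or_pos t with rfl | ht
  · simp
  have ht' : (0 : ℝ) < t := by exact_mod_cast ht
  have h1 : (t : ℝ) + 1 ≤ Real.exp (1 / t) * t := by
    have := mul_le_mul_of_nonneg_right (Real.add_one_le_exp (1 / (t : ℝ))) ht'.le
    have e : (1 / (t : ℝ) + 1) * t = t + 1 := by field_simp; ring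
    linarith
  calc ((t : ℝ) + 1) ^ t ≤ (Real.exp (1 / t) * t) ^ t := by gcongr
    _ = Real.exp 1 * (t : ℝ) ^ t := by
      rw [mul_pow, ← Real.exp_nat_mul, mul_one_div_cancel ht'.ne']

lemma choose_le_exp_mul_choose (t : ℕ) :
    ((t ^ 2 + t + t).choose t : ℝ) ≤ Real.exp 1 * ((t ^ 2 + t).choose t : ℝ) := by
  have h := descFactorial_mul_pow_le t t le_rfl
  rw [Nat.descFactorial_eq_factorial_mul_choose, Nat.descFactorial_eq_factorial_mul_choose] at h
  have h' : (t ^ 2 + t + t).choose t * t ^ t ≤ (t + 1) ^ t * (t ^ 2 + t).choose t :=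
    Nat.le_of_mul_le_mul_left (by linarith) t.factorial_pos
  have hr : ((t ^ 2 + t + t).choose t : ℝ) * (t : ℝ) ^ t
      ≤ ((t : ℝ) + 1) ^ t * ((t ^ 2 + t).choose t : ℝ) := by exact_mod_cast h'
  -- Positive also for `t = 0`, as `0 ^ 0 = 1`.
  have hp : (0 : ℝ) < (t : ℝ) ^ t := by exact_mod_cast Nat.pow_self_pos
  refine le_of_mul_le_mul_right (hr.trans ?_) hp
  have := mul_le_mul_of_nonneg_right (succ_pow_le_exp_mul_pow t)
    (Nat.cast_nonneg (α := ℝ) ((t ^ 2 + t).choose t))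
  linarith

/-- For every integer `s ≥ 1`, setting `n = s²`, if `A` and `B` are chosen
independently and uniformly at random among the `s`-element subsets of `Fin n`, then the
probability that `|A ∩ B| = 1` is at least `1/e`; equivalently,
`n * C(n-1, s-1) * C(n-s, s-1) ≥ (1 / e) * C(n, s)²`. -/
theorem stmt_1 (s : ℕ) (hs : 1 ≤ s) (n : ℕ) (hn : n = s ^ 2) :
    ((n * Nat.choose (n - 1) (s - 1) * Nat.choose (n - s) (s - 1) : ℕ) : ℝ) ≥
      (1 / Real.exp 1) * ((Nat.choose n s : ℝ)) ^ 2 := by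
  obtain ⟨t, rfl⟩ := Nat.exists_eq_add_of_le' hs
  have hn1 : n = t ^ 2 + t + t + 1 := by rw [hn]; ring
  have e1 : n - 1 = t ^ 2 + t + t := by omega
  have e2 : n - (t + 1) = t ^ 2 + t := by omega
  have habs : n * (t ^ 2 + t + t).choose t = n.choose (t + 1) * (t + 1) := by
    rw [hn1]; exact Nat.add_one_mul_choose_eq _ _
  -- Since `n = (t + 1)²`, one factor `t + 1` cancels from the absorption identity.
  have hc : n.choose (t + 1) = (t + 1) * (t ^ 2 + t + t).choose t := by
    apply Nat.eq_of_mul_eq_mul_right (Nat.succ_pos t)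
    rw [Nat.succ_eq_add_one, ← habs, hn]; ring
  rw [e1, e2, Nat.add_sub_cancel, hc, hn]
  have h := choose_le_exp_mul_choose t
  push_cast
  rw [ge_iff_le, one_div, inv_mul_le_iff₀ (Real.exp_pos 1)]
  have := mul_le_mul_of_nonneg_left h
    (show (0 : ℝ) ≤ ((t : ℝ) + 1) ^ 2 * ((t ^ 2 + t + t).choose t : ℝ) by positivity)
  linarith
end

section
/- Let n, N ≥ 1 be integers, let λ be a real number with 0 < λ ≤ 1/2, and let E : (Fin n → ZMod 2) →ₗ[ZMod 2] (Fin N → ZMod 2) be a linear map such that every nonzero z satisfies hammingNorm (E z) ≥ λ · N. Then for all x, y : Fin n → ZMod 2 with x ≠ y, (1/N) · Σ_{i : Fin N} (−1)^{((E x) i).val} · (−1)^{((E y) i).val} ≤ 1 − 2λ, while for x = y this normalized sum equals 1. -/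
/-!
Each term of the sum is `1` where `E x` and `E y` agree and `-1` where they differ, so the sum is
`N - 2 d`, where `d` is the Hamming distance of `E x` and `E y` (`sum_sign_mul_sign`). By
linearity `d` is the weight of `E (x - y)`, hence at least `μ N` if `x ≠ y`, and `d = 0` if `x = y`.
-/

lemma sign_mul_sign (a b : ZMod 2) :
    (-1 : ℝ) ^ a.val * (-1 : ℝ) ^ b.val = 1 - 2 * (if a - b ≠ 0 then 1 else 0) := by
  have h : ∀ c : ZMod 2, c = 0 ∨ c = 1 := by decide
  rcases h a with rfl | rfl <;> rcases h b with rfl | rfl <;> norm_num [ZMod.val_one]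

lemma sum_sign_mul_sign {N : ℕ} (u v : Fin N → ZMod 2) :
    ∑ i : Fin N, (-1 : ℝ) ^ (u i).val * (-1 : ℝ) ^ (v i).val
      = N - 2 * (hammingNorm (u - v) : ℝ) := by
  simp only [sign_mul_sign, Finset.sum_sub_distrib, ← Finset.mul_sum, Finset.sum_boole]
  simp [hammingNorm]

/-- Let `n, N ≥ 1`, let `μ` be a real with `0 < μ ≤ 1/2`, and let
`E : (Fin n → ZMod 2) →ₗ[ZMod 2] (Fin N → ZMod 2)` be a linear code such that every
nonzero `z` satisfies `hammingNorm (E z) ≥ μ * N`. Then for all `x ≠ y`,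
`(1/N) * Σ_i (-1)^((E x) i).val * (-1)^((E y) i).val ≤ 1 - 2μ`, while for `x = y` this
normalized sum equals `1`. -/
theorem stmt_10 (n N : ℕ) (hn : 1 ≤ n) (hN : 1 ≤ N) (μ : ℝ) (hμ0 : 0 < μ)
    (hμ2 : μ ≤ 1 / 2)
    (E : (Fin n → ZMod 2) →ₗ[ZMod 2] (Fin N → ZMod 2))
    (hE : ∀ z : Fin n → ZMod 2, z ≠ 0 → (hammingNorm (E z) : ℝ) ≥ μ * N) :
    (∀ x y : Fin n → ZMod 2, x ≠ y →
        (1 / (N : ℝ)) * ∑ i : Fin N, (-1 : ℝ) ^ (E x i).val * (-1 : ℝ) ^ (E y i).val ≤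
          1 - 2 * μ) ∧
      ∀ x : Fin n → ZMod 2,
        (1 / (N : ℝ)) * ∑ i : Fin N, (-1 : ℝ) ^ (E x i).val * (-1 : ℝ) ^ (E x i).val = 1 := by
  have hN' : (0 : ℝ) < N := by exact_mod_cast hN
  constructor
  · intro x y hxy
    have h := hE (x - y) (sub_ne_zero.mpr hxy)
    rw [map_sub] at h
    rw [sum_sign_mul_sign, one_div, inv_mul_le_iff₀ hN']
    linarith
  · intro x
    rw [sum_sign_mul_sign, sub_self, hammingNorm_zero]
    field_simp
    simp
end

section
/- There is a constant c > 0 such that for all integers k ≥ 2 and s ≥ 2, setting n = s^k and t = s^{k−1}, if A_1, …, A_k are chosen independently and uniformly at random among the t-element subsets of Fin n, then the probability that |A_1 ∩ A_2 ∩ ⋯ ∩ A_k| = 1 is at least c; equivalently, the number of k-tuples (A_1, …, A_k) of t-element subsets of Fin n whose common intersection has exactly one element is at least c · (C(n, t))^k. -/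
/-!
Let `B` be the intersection of all the sets but one and `b = |B|`. The remaining set meets `B` in
exactly one point for `b * C(n - b, t - 1)` of its `C(n, t)` choices (`card_meet_one`), so the
number of good tuples is the sum of `b * C(n - b, t - 1)` over all `(k - 1)`-tuples
(`card_good_eq`).

The function `x ↦ C(x, t - 1)` is convex, hence lies above its tangent at `x₀ = n - 1 - s`
(`choose_tangent`), which corresponds to `b = s + 1`. Under the uniform measure `E b = s` and
`E b² ≤ s + s²` (`sum_inter_card`, `sum_inter_card_sq`), so the linear term of the tangent
contributes a nonnegative multiple of `E[b (s + 1 - b)] ≥ 0`, and the mean of `b * C(n - b, t - 1)`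
is at least `s * C(n - 1 - s, t - 1)`. Finally
`C(n - 1 - s, t - 1) ≥ (1 - 1/s)^s * C(n - 1, t - 1)` (`choose_drop`), `(1 - 1/s)^s ≥ 1/4`, and
`s * C(n - 1, t - 1) = C(n, t)`, which gives the constant `c = 1/4`.
-/

/-- Tangent-line inequality for the convex function `x ↦ C(x, m + 1)`, with slope the forward
difference `C(x₀, m)` at `x₀`. -/
lemma choose_tangent (m x₀ x : ℕ) :
    (x₀.choose (m + 1) : ℝ) + ((x : ℝ) - x₀) * (x₀.choose m : ℝ) ≤ (x.choose (m + 1) : ℝ) := by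
  rcases le_total x₀ x with h | h
  · induction x, h using Nat.le_induction with
    | base => simp
    | succ y hy ih =>
      have h1 : (x₀.choose m : ℝ) ≤ y.choose m := by
        exact_mod_cast Nat.choose_le_choose m hy
      rw [Nat.choose_succ_succ]
      push_cast
      linarith
  · obtain ⟨d, rfl⟩ := Nat.exists_eq_add_of_le h
    have key : ∀ e : ℕ, ((x + e).choose (m + 1) : ℝ) ≤
        x.choose (m + 1) + e * ((x + e).choose m : ℝ) := by
      intro e
      induction e with
      | zero => simp
      | succ e ih =>
        have h1 : ((x + e).choose m : ℝ) ≤ (x + e + 1).choose m := by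
          exact_mod_cast Nat.choose_le_choose m (Nat.le_succ _)
        rw [← add_assoc, Nat.choose_succ_succ]
        push_cast
        nlinarith [(Nat.cast_nonneg e : (0 : ℝ) ≤ e)]
    have := key d
    push_cast
    linarith

/-- Each of the `j` steps from `C(N, m)` down to `C(N - j, m)` loses a factor
`1 - m / (N - i) ≥ 1 - 1/s`. -/
lemma choose_drop (N m s : ℕ) (hs : 2 ≤ s) (j : ℕ) (hj : m * s + j ≤ N + 1) (hjN : j ≤ N) :
    (1 - 1 / (s : ℝ)) ^ j * (N.choose m : ℝ) ≤ ((N - j).choose m : ℝ) := by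
  have hs0 : (0 : ℝ) < s := by positivity
  have hs1 : (0 : ℝ) ≤ 1 - 1 / (s : ℝ) := by
    rw [sub_nonneg, div_le_one hs0]
    exact_mod_cast (by omega : 1 ≤ s)
  induction j with
  | zero => simp
  | succ j ih =>
    have ih := ih (by omega) (by omega)
    obtain ⟨M, rfl⟩ : ∃ M, N = M + (j + 1) := ⟨N - (j + 1), by omega⟩
    have e1 : M + (j + 1) - j = M + 1 := by omega
    have e2 : M + (j + 1) - (j + 1) = M := by omega
    rw [e1] at ih
    rw [e2, pow_succ]
    have hms : m * s ≤ M + 1 := by omega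
    have hmM : m ≤ M + 1 := by nlinarith
    have h3 : (M.choose m : ℝ) * (M + 1) = (M + 1).choose m * ((M : ℝ) + 1 - m) := by
      have := Nat.choose_mul_succ_eq M m
      have h4 : ((M + 1 - m : ℕ) : ℝ) = (M : ℝ) + 1 - m := by
        push_cast [Nat.cast_sub hmM]; ring
      rw [← h4]
      exact_mod_cast this
    have h5 : (1 - 1 / (s : ℝ)) * ((M + 1).choose m : ℝ) ≤ M.choose m := by
      have hM : (0 : ℝ) < (M : ℝ) + 1 := by positivity
      refine le_of_mul_le_mul_right ?_ hM
      rw [h3]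
      have h6 : (m : ℝ) ≤ ((M : ℝ) + 1) / s := by
        rw [le_div_iff₀ hs0]; exact_mod_cast hms
      have h7 : (0 : ℝ) ≤ (M + 1).choose m := by positivity
      have h8 : (1 - 1 / (s : ℝ)) * ((M + 1).choose m : ℝ) * ((M : ℝ) + 1)
          = (M + 1).choose m * (M + 1 - ((M : ℝ) + 1) / s) := by
        field_simp
      rw [h8]
      exact mul_le_mul_of_nonneg_left (by linarith) h7
    calc _ = (1 - 1 / (s : ℝ)) * ((1 - 1 / (s : ℝ)) ^ j * ((M + (j + 1)).choose m : ℝ)) := by ring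
      _ ≤ (1 - 1 / (s : ℝ)) * ((M + 1).choose m : ℝ) := mul_le_mul_of_nonneg_left ih hs1
      _ ≤ _ := h5

lemma quarter_le (s : ℕ) (hs : 2 ≤ s) : (1 / 4 : ℝ) ≤ (1 - 1 / (s : ℝ)) ^ s := by
  have hs2 : (2 : ℝ) ≤ s := by exact_mod_cast hs
  have hs0 : (0 : ℝ) < s := by linarith
  have h1 : 1 / (s : ℝ) ≤ 1 := by rw [div_le_one hs0]; linarith
  -- Bernoulli's inequality with the real exponent `s / 2`
  have h := one_add_mul_self_le_rpow_one_add (s := -(1 / (s : ℝ))) (by linarith)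
    (p := (s : ℝ) / 2) (by linarith)
  have h2 : 1 + (s : ℝ) / 2 * -(1 / (s : ℝ)) = 1 / 2 := by field_simp; norm_num
  rw [h2, ← sub_eq_add_neg] at h
  have h3 : ((1 - 1 / (s : ℝ)) ^ ((s : ℝ) / 2)) ^ 2 = (1 - 1 / (s : ℝ)) ^ s := by
    rw [← Real.rpow_natCast _ 2, ← Real.rpow_mul (by linarith), ← Real.rpow_natCast _ s]
    congr 1
    push_cast
    ring
  rw [← h3]
  nlinarith

section Counting

open Finset

variable {n : ℕ}

lemma card_meet_one (m : ℕ) (B : Finset (Fin n)) :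
    #{a ∈ powersetCard (m + 1) (univ : Finset (Fin n)) | #(a ∩ B) = 1} =
      #B * (n - #B).choose m := by
  have h : #{a ∈ powersetCard (m + 1) (univ : Finset (Fin n)) | #(a ∩ B) = 1} =
      #(B ×ˢ powersetCard m Bᶜ) := by
    symm
    refine card_bij (fun p _ => insert p.1 p.2) ?_ ?_ ?_
    · rintro ⟨x, a⟩ hp
      simp only [mem_product, mem_powersetCard] at hp
      obtain ⟨hx, ha, hc⟩ := hp
      have hd : a ∩ B = ∅ := by
        rw [← disjoint_iff_inter_eq_empty]; exact subset_compl_iff_disjoint_right.1 ha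
      have hxa : x ∉ a := fun h => by simpa [hx] using ha h
      simp [card_insert_of_notMem hxa, hc, insert_inter_of_mem hx, hd]
    · rintro ⟨x, a⟩ hp ⟨y, a'⟩ hp' heq
      simp only [mem_product, mem_powersetCard] at hp hp' heq
      have h1 := hp.2.1
      have h2 := hp'.2.1
      have hxy : x = y := by
        have : x ∈ insert y a' := heq ▸ mem_insert_self x a
        rcases mem_insert.1 this with h | h
        · exact h
        · simpa [hp.1] using h2 h
      subst hxy
      have hxa : x ∉ a := fun h => by simpa [hp.1] using h1 h
      have hxa' : x ∉ a' := fun h => by simpa [hp.1] using h2 h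
      rw [← erase_insert hxa, heq, erase_insert hxa']
    · intro a ha
      simp only [mem_filter, mem_powersetCard, subset_univ, true_and] at ha
      obtain ⟨x, hx⟩ := card_eq_one.1 ha.2
      have hxm : x ∈ a ∩ B := by rw [hx]; exact mem_singleton_self x
      rw [mem_inter] at hxm
      refine ⟨(x, a.erase x), ?_, insert_erase hxm.1⟩
      simp only [mem_product, mem_powersetCard]
      refine ⟨hxm.2, ?_, by rw [card_erase_of_mem hxm.1, ha.1]; rfl⟩
      intro y hy
      rw [mem_compl]
      intro hyB
      have : y ∈ a ∩ B := mem_inter.2 ⟨mem_of_mem_erase hy, hyB⟩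
      rw [hx, mem_singleton] at this
      exact ne_of_mem_erase hy this
  rw [h, card_product, card_powersetCard, card_compl, Fintype.card_fin]

/-- The `k`-tuples of `t`-element subsets of `Fin n`. -/
def tuples (n k t : ℕ) : Finset (Fin k → Finset (Fin n)) :=
  Fintype.piFinset fun _ => powersetCard t univ

lemma card_tuples (k t : ℕ) : #(tuples n k t) = n.choose t ^ k := by
  simp [tuples, Fintype.card_piFinset]

/-- Counting the good `(k + 1)`-tuples by the intersection of their last `k` members. -/
lemma card_good_eq (k m : ℕ) :
    #{A : Fin (k + 1) → Finset (Fin n) | (∀ i, #(A i) = m + 1) ∧ #(univ.inf A) = 1} =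
      ∑ A ∈ tuples n k (m + 1), #(univ.inf A) * (n - #(univ.inf A)).choose m := by
  simp_rw [← card_meet_one]
  rw [← card_sigma]
  symm
  refine card_bij (fun p _ => Fin.cons p.2 p.1) ?_ ?_ ?_
  · rintro ⟨A, a⟩ h
    simpa [tuples, Fin.forall_fin_succ, Fin.univ_succ, inf_map, Function.comp_def, and_comm,
      and_assoc, and_left_comm] using h
  · rintro ⟨A, a⟩ _ ⟨A', a'⟩ _ h
    obtain ⟨h1, h2⟩ := Fin.cons_inj.1 h
    subst h1 h2
    rfl
  · intro A h
    refine ⟨⟨fun i => A i.succ, A 0⟩, ?_, Fin.cons_self_tail A⟩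
    simpa [tuples, Fin.forall_fin_succ, Fin.univ_succ, inf_map, Function.comp_def, and_comm,
      and_assoc, and_left_comm] using h

/-- The number of tuples all of whose members contain a given set `S`. -/
lemma card_tuples_superset (k t : ℕ) (S : Finset (Fin n)) (hS : #S ≤ t) :
    #{A ∈ tuples n k t | S ⊆ univ.inf A} = (n - #S).choose (t - #S) ^ k := by
  have h1 : {A ∈ tuples n k t | S ⊆ univ.inf A} =
      Fintype.piFinset fun _ : Fin k => {a ∈ powersetCard t (univ : Finset (Fin n)) | S ⊆ a} := by
    ext A
    simp only [tuples, mem_filter, Fintype.mem_piFinset, Finset.le_inf_iff, mem_univ,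
      true_imp_iff, forall_and]
  have h2 : #{a ∈ powersetCard t (univ : Finset (Fin n)) | S ⊆ a} =
      #(powersetCard (t - #S) Sᶜ) := by
    refine card_bij' (fun a _ => a \ S) (fun a _ => a ∪ S) ?_ ?_ ?_ ?_
    · intro a ha
      simp only [mem_filter, mem_powersetCard] at ha ⊢
      refine ⟨fun y hy => by simpa using (mem_sdiff.1 hy).2, ?_⟩
      rw [card_sdiff_of_subset ha.2, ha.1.2]
    · intro a ha
      simp only [mem_filter, mem_powersetCard] at ha ⊢
      refine ⟨⟨subset_univ _, ?_⟩, subset_union_right⟩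
      rw [card_union_of_disjoint (subset_compl_iff_disjoint_right.1 ha.1), ha.2]
      omega
    · intro a ha
      exact sdiff_union_of_subset (mem_filter.1 ha).2
    · intro a ha
      exact union_sdiff_cancel_right
        (subset_compl_iff_disjoint_right.1 (mem_powersetCard.1 ha).1)
  rw [h1, Fintype.card_piFinset, prod_const, h2, card_powersetCard, card_compl]
  simp

lemma sum_inter_card (k t : ℕ) (ht : 1 ≤ t) :
    ∑ A ∈ tuples n k t, #(univ.inf A) = n * (n - 1).choose (t - 1) ^ k := by
  have h : ∀ A : Fin k → Finset (Fin n), #(univ.inf A) =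
      ∑ x : Fin n, if {x} ⊆ univ.inf A then 1 else 0 := by
    intro A
    rw [← card_filter]
    simp only [singleton_subset_iff, filter_univ_mem]
  simp_rw [h]
  rw [sum_comm]
  simp_rw [← card_filter]
  rw [sum_congr rfl fun x _ => card_tuples_superset k t {x} (by simpa using ht)]
  simp

lemma sum_inter_card_sq (k t : ℕ) (ht : 2 ≤ t) :
    ∑ A ∈ tuples n k t, #(univ.inf A) ^ 2 =
      n * (n - 1).choose (t - 1) ^ k + n * (n - 1) * (n - 2).choose (t - 2) ^ k := by
  have h : ∀ A : Fin k → Finset (Fin n), #(univ.inf A) ^ 2 = #(univ.inf A) +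
      ∑ p ∈ (univ : Finset (Fin n)).offDiag, if {p.1, p.2} ⊆ univ.inf A then 1 else 0 := by
    intro A
    have e : {p ∈ (univ : Finset (Fin n)).offDiag | {p.1, p.2} ⊆ univ.inf A} =
        (univ.inf A).offDiag := by
      ext p
      simp only [mem_filter, mem_offDiag, mem_univ, true_and, insert_subset_iff,
        singleton_subset_iff]
      tauto
    rw [← card_filter, e, offDiag_card, sq]
    have := Nat.le_mul_self #(univ.inf A)
    omega
  simp_rw [h]
  rw [sum_add_distrib, sum_inter_card k t (by omega), sum_comm]
  simp_rw [← card_filter]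
  rw [sum_congr rfl fun p hp => by
    have h2 : #({p.1, p.2} : Finset (Fin n)) = 2 := card_pair (mem_offDiag.1 hp).2.2
    rw [card_tuples_superset k t {p.1, p.2} (by omega), h2]]
  simp [offDiag_card, Nat.mul_sub]

end Counting

/-- There is a constant `c > 0` such that for all integers `k ≥ 2` and
`s ≥ 2`, setting `n = s^k` and `t = s^(k-1)`, the number of `k`-tuples `(A_1, …, A_k)` of
`t`-element subsets of `Fin n` whose common intersection has exactly one element is at
least `c * C(n, t)^k`; equivalently, if the `A_i` are chosen independently and uniformly
at random among `t`-element subsets, the probability that `|A_1 ∩ ⋯ ∩ A_k| = 1` is at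
least `c`. -/
theorem stmt_14 :
    ∃ c : ℝ, 0 < c ∧
      ∀ k s : ℕ, 2 ≤ k → 2 ≤ s →
        ∀ n t : ℕ, n = s ^ k → t = s ^ (k - 1) →
          ((Finset.univ.filter
              (fun A : Fin k → Finset (Fin n) =>
                (∀ i, (A i).card = t) ∧ (Finset.univ.inf A).card = 1)).card : ℝ) ≥
            c * ((Nat.choose n t : ℝ)) ^ k := by
  refine ⟨1 / 4, by norm_num, ?_⟩
  intro k s hk hs n t hn ht
  obtain ⟨k, rfl⟩ : ∃ k', k = k' + 1 := ⟨k - 1, by omega⟩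
  rw [Nat.add_sub_cancel] at ht
  have hnt : n = s * t := by rw [hn, ht, pow_succ, mul_comm]
  have hst : s ≤ t := by
    rw [ht]; exact Nat.le_self_pow (by omega) s
  obtain ⟨m, rfl⟩ : ∃ m, t = m + 2 := ⟨t - 2, by omega⟩
  obtain ⟨N, rfl⟩ : ∃ N, n = N + 2 := ⟨n - 2, by have : 2 ≤ n := by { nlinarith }; omega⟩
  have hNs : s ≤ N + 1 := by nlinarith
  have hs0 : (0 : ℝ) < s := by positivity
  have hm0 : (0 : ℝ) < (m : ℝ) + 2 := by positivity
  have hN0 : (0 : ℝ) < (N : ℝ) + 1 := by positivity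
  have hntR : (N : ℝ) + 2 = s * (m + 2) := by exact_mod_cast hnt
  have htR : (m : ℝ) + 2 = (s : ℝ) ^ k := by exact_mod_cast ht
  rw [card_good_eq k (m + 1)]
  set C : ℝ := ((N + 2).choose (m + 2) : ℝ) with hC
  set C₁ : ℝ := ((N + 1).choose (m + 1) : ℝ) with hC₁
  set C₂ : ℝ := (N.choose m : ℝ) with hC₂
  have hC0 : 0 ≤ C := by positivity
  have hC₂0 : 0 ≤ C₂ := by positivity
  have r1 : C = s * C₁ := by
    have : ((N : ℝ) + 2) * C₁ = C * (m + 2) := by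
      rw [hC, hC₁]
      exact_mod_cast Nat.add_one_mul_choose_eq (N + 1) (m + 1)
    rw [hntR] at this
    apply mul_right_cancel₀ hm0.ne'
    linarith
  have r2 : s * C₂ ≤ C₁ := by
    have h1 : ((N : ℝ) + 1) * C₂ = C₁ * (m + 1) := by
      rw [hC₁, hC₂]
      exact_mod_cast Nat.add_one_mul_choose_eq N m
    have hs1 : (1 : ℝ) ≤ s := by exact_mod_cast (by omega : 1 ≤ s)
    have h2 : s * ((m : ℝ) + 1) ≤ N + 1 := by linarith
    have hm1 : (0 : ℝ) < (m : ℝ) + 1 := by positivity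
    refine le_of_mul_le_mul_right ?_ hm1
    rw [← h1]
    nlinarith
  -- first and second moments of the size of the intersection
  have M1 : ∑ A ∈ tuples (N + 2) k (m + 2), ((Finset.univ.inf A).card : ℝ) = s * C ^ k := by
    have := sum_inter_card (n := N + 2) k (m + 2) (by omega)
    have h : ∑ A ∈ tuples (N + 2) k (m + 2), ((Finset.univ.inf A).card : ℝ) =
        ((N : ℝ) + 2) * C₁ ^ k := by
      rw [hC₁]; exact_mod_cast this
    rw [h, r1, mul_pow, ← htR, hntR]
    ring
  have M2 : ∑ A ∈ tuples (N + 2) k (m + 2), ((Finset.univ.inf A).card : ℝ) ^ 2 ≤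
      (s + s ^ 2) * C ^ k := by
    have := sum_inter_card_sq (n := N + 2) k (m + 2) (by omega)
    have h : ∑ A ∈ tuples (N + 2) k (m + 2), ((Finset.univ.inf A).card : ℝ) ^ 2 =
        ((N : ℝ) + 2) * C₁ ^ k + ((N : ℝ) + 2) * (N + 1) * C₂ ^ k := by
      rw [hC₁, hC₂]; exact_mod_cast this
    have h1 : ((N : ℝ) + 2) * C₁ ^ k = s * C ^ k := by
      rw [r1, mul_pow, ← htR, hntR]; ring
    have h2 : ((s : ℝ) ^ k) ^ 2 * C₂ ^ k ≤ C ^ k := by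
      rw [← pow_mul, mul_comm k 2, pow_mul, ← mul_pow]
      refine pow_le_pow_left₀ (by positivity) ?_ k
      rw [r1]
      nlinarith
    have h3 : ((N : ℝ) + 2) * (N + 1) * C₂ ^ k ≤ s ^ 2 * C ^ k := by
      calc ((N : ℝ) + 2) * (N + 1) * C₂ ^ k ≤ ((N : ℝ) + 2) * (N + 2) * C₂ ^ k := by
            gcongr; norm_num
        _ = s ^ 2 * (((s : ℝ) ^ k) ^ 2 * C₂ ^ k) := by rw [hntR, htR]; ring
        _ ≤ _ := by gcongr
    rw [h, h1]
    linarith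
  set x₀ : ℕ := N + 1 - s with hx₀
  have hx₀R : (x₀ : ℝ) = N + 1 - s := by rw [hx₀]; push_cast [Nat.cast_sub hNs]; ring
  set H : ℝ := (x₀.choose (m + 1) : ℝ) with hH
  set D : ℝ := (x₀.choose m : ℝ) with hD
  have hD0 : 0 ≤ D := by positivity
  have hsum : s * C ^ k * H ≤ ∑ A ∈ tuples (N + 2) k (m + 2),
      ((Finset.univ.inf A).card : ℝ) *
        ((N + 2 - (Finset.univ.inf A).card).choose (m + 1) : ℝ) := by
    have hpt : ∀ A ∈ tuples (N + 2) k (m + 2),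
        ((Finset.univ.inf A).card : ℝ) * (H + (s + 1) * D)
          - D * ((Finset.univ.inf A).card : ℝ) ^ 2 ≤
        ((Finset.univ.inf A).card : ℝ) *
          ((N + 2 - (Finset.univ.inf A).card).choose (m + 1) : ℝ) := by
      intro A _
      have hb : (Finset.univ.inf A).card ≤ N + 2 := by
        simpa using Finset.card_le_univ (Finset.univ.inf A)
      have h := choose_tangent m x₀ (N + 2 - (Finset.univ.inf A).card)
      rw [Nat.cast_sub hb, hx₀R] at h
      push_cast at h
      have := mul_le_mul_of_nonneg_left h
        (Nat.cast_nonneg (Finset.univ.inf A).card : (0 : ℝ) ≤ _)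
      refine le_trans (le_of_eq ?_) this
      ring
    refine le_trans ?_ (Finset.sum_le_sum hpt)
    rw [Finset.sum_sub_distrib, ← Finset.sum_mul, ← Finset.mul_sum, M1]
    nlinarith [mul_le_mul_of_nonneg_left M2 hD0]
  have hdrop : 1 / 4 * C₁ ≤ H := by
    -- `(t - 1) * s = n - s` is exactly the bound needed for `s` steps starting at `n - 1`
    have h := choose_drop (N + 1) (m + 1) s hs s (by nlinarith) hNs
    exact le_trans (mul_le_mul_of_nonneg_right (quarter_le s hs) (by positivity)) h
  push_cast
  calc 1 / 4 * C ^ (k + 1) = s * C ^ k * (1 / 4 * C₁) := by rw [pow_succ]; nth_rw 2 [r1]; ring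
    _ ≤ s * C ^ k * H := by gcongr
    _ ≤ _ := hsum
end
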